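/- The periodic-boundary CA on 5 cells with local rule g(x₁,x₂,x₃,x₄) = x₁ ⊕ x₃ ⊕ x₁x₄, i.e., the map T : F₂^5 → F₂^5 given by T(x)_i = x_i ⊕ x_{i+2} ⊕ x_i x_{i+3} with indices taken modulo 5, is a bijection. -/

import Mathlib

/-!
Let `σ` be the shift by the step of the rule and `y` the image of `x`. Over a Boolean ring the
quadratic rule yields a recursion that is affine in `x` once `y` is known, namely
`x (σ² i) = y (σ i) + y i * (1 + x i)`. Hence the difference `d` of two preimages of `y` satisfies
`d (σ² i) = y i * d i`: it can only shrink from `i` to `σ² i`. As `σ` has odd order, `σ²` has the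
same orbits as `σ`, so `d` is constant on them and `d * y = d`. So `y` is `1` wherever `d` lives,
which forces both preimages to be `1` there too; they do not differ, and `d = 0`.
-/

section Dvd

variable {ι M : Type*} {σ : Equiv.Perm ι} {f : ι → M}

lemma dvd_apply_perm_pow [Monoid M] (h : ∀ i, f i ∣ f (σ i)) (n : ℕ) (i : ι) :
    f i ∣ f ((σ ^ n) i) := by
  induction n with
  | zero => rfl
  | succ n ih =>
    rw [pow_succ', Equiv.Perm.mul_apply]
    exact ih.trans (h _)

lemma dvd_apply_perm_of_dvd_apply_sq [Monoid M] (hσ : Odd (orderOf σ))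
    (h : ∀ i, f i ∣ f (σ (σ i))) (i : ι) : f i ∣ f (σ i) := by
  obtain ⟨m, hm⟩ := exists_pow_eq_self_of_coprime (Nat.coprime_two_left.mpr hσ)
  have hsq : ∀ i, f i ∣ f ((σ ^ 2) i) := h
  simpa only [hm] using dvd_apply_perm_pow hsq m i

lemma apply_perm_dvd_of_dvd_apply_perm [Monoid M] (hσ : IsOfFinOrder σ)
    (h : ∀ i, f i ∣ f (σ i)) (i : ι) : f (σ i) ∣ f i := by
  have hinv : (σ ^ (orderOf σ - 1)) (σ i) = i := by
    rw [← Equiv.Perm.mul_apply, pow_sub_one_mul hσ.orderOf_pos.ne', pow_orderOf_eq_one,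
      Equiv.Perm.one_apply]
  simpa only [hinv] using dvd_apply_perm_pow h (orderOf σ - 1) (σ i)

lemma dvd_antisymm_of_isIdempotentElem [CommSemigroup M] {a b : M} (ha : IsIdempotentElem a)
    (hb : IsIdempotentElem b) (hab : a ∣ b) (hba : b ∣ a) : a = b := by
  obtain ⟨c, hc⟩ := hab
  obtain ⟨d, hd⟩ := hba
  calc
    a = b * a := by rw [hd, ← mul_assoc, hb.eq]
    _ = a * b := mul_comm b a
    _ = b := by rw [hc, ← mul_assoc, ha.eq]

end Dvd

section BooleanRing

open BooleanRing

variable {ι R : Type*} [BooleanRing R] {σ : Equiv.Perm ι}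

lemma apply_perm_eq_of_dvd_apply_sq (hσ : Odd (orderOf σ)) {f : ι → R}
    (h : ∀ i, f i ∣ f (σ (σ i))) (i : ι) : f (σ i) = f i :=
  have hdvd : ∀ i, f i ∣ f (σ i) := dvd_apply_perm_of_dvd_apply_sq hσ h
  dvd_antisymm_of_isIdempotentElem (isIdempotentElem _) (isIdempotentElem _)
    (apply_perm_dvd_of_dvd_apply_perm (orderOf_pos_iff.mp hσ.pos) hdvd i) (hdvd i)

/-- The cellular automaton with local rule `x₀ + x₁ + x₀ * x₋₁`, where the neighbours of cell `i`
are `σ i` and `σ⁻¹ i`. A permutation in place of a cyclic shift covers every boundary length and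
every step size at once. Up to complementing and reflecting all cells, and a shift, this is the map
`χ` of the Keccak permutation. -/
def chiMap (σ : Equiv.Perm ι) (x : ι → R) : ι → R :=
  fun i => x i + x (σ i) + x i * x (σ.symm i)

lemma chiMap_recursion (x : ι → R) (i : ι) :
    x (σ (σ i)) = chiMap σ x (σ i) + chiMap σ x i * (1 + x i) := by
  have hprod : chiMap σ x i * (1 + x i) = x (σ i) * (1 + x i) := by
    have h0 : x i * (1 + x i) = 0 := mul_one_add_self _
    unfold chiMap
    linear_combination (1 + x (σ.symm i)) * h0
  have h1 : x (σ i) + x (σ i) = 0 := add_self _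
  have h2 : x (σ i) * x i + x (σ i) * x i = 0 := add_self _
  rw [hprod, chiMap, σ.symm_apply_apply]
  linear_combination -h1 - h2

lemma sub_apply_of_chiMap_eq {x x' : ι → R} (h : chiMap σ x = chiMap σ x') (i : ι) :
    (x - x') (σ (σ i)) = chiMap σ x i * (x - x') i := by
  simp only [Pi.sub_apply]
  rw [chiMap_recursion x i, chiMap_recursion x' i, h]
  ring

lemma mul_eq_of_mul_chiMap_eq (hσ : Odd (orderOf σ)) {c x : ι → R} (hc : ∀ i, c (σ i) = c i)
    (h : ∀ i, c i * chiMap σ x i = c i) (i : ι) : c i * x i = c i := by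
  have hstep : ∀ i, c (σ (σ i)) * x (σ (σ i)) = c i * x i := fun i => by
    have hnext : c i * chiMap σ x (σ i) = c i := by simpa only [hc] using h (σ i)
    rw [hc, hc, chiMap_recursion x i]
    linear_combination hnext + (1 + x i) * h i + add_self (c i)
  have hconst : ∀ i, c (σ i) * x (σ i) = c i * x i :=
    apply_perm_eq_of_dvd_apply_sq (f := fun i => c i * x i) hσ fun i => (hstep i).symm.dvd
  have hsucc : c i * x (σ i) = c i * x i := by rw [← hconst i, hc]
  have hpred : c i * x (σ.symm i) = c i * x i := by
    simpa only [σ.apply_symm_apply, ← hc (σ.symm i)] using (hconst (σ.symm i)).symm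
  calc
    c i * x i = c i * x i + c i * x i + x i * (c i * x i) := by
      rw [add_self, zero_add, mul_left_comm, mul_self]
    _ = c i * x i + c i * x (σ i) + x i * (c i * x (σ.symm i)) := by rw [hsucc, hpred]
    _ = c i * chiMap σ x i := by unfold chiMap; ring
    _ = c i := h i

theorem chiMap_injective (hσ : Odd (orderOf σ)) :
    Function.Injective (chiMap σ : (ι → R) → ι → R) := by
  intro x x' h
  have hshift : ∀ i, (x - x') (σ (σ i)) = chiMap σ x i * (x - x') i := sub_apply_of_chiMap_eq h
  have hconst : ∀ i, (x - x') (σ i) = (x - x') i :=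
    apply_perm_eq_of_dvd_apply_sq hσ fun i => Dvd.intro_left _ (hshift i).symm
  have hfix : ∀ i, (x - x') i * chiMap σ x i = (x - x') i := fun i => by
    rw [mul_comm, ← hshift, hconst, hconst]
  have hx : ∀ i, (x - x') i * x i = (x - x') i := mul_eq_of_mul_chiMap_eq hσ hconst hfix
  have hx' : ∀ i, (x - x') i * x' i = (x - x') i :=
    mul_eq_of_mul_chiMap_eq hσ hconst (h ▸ hfix)
  refine sub_eq_zero.mp (funext fun i => ?_)
  calc
    (x - x') i = (x - x') i * (x - x') i := (mul_self _).symm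
    _ = (x - x') i * x i - (x - x') i * x' i := mul_sub _ _ _
    _ = 0 := by rw [hx, hx', sub_self]

theorem stmt6_general [Finite ι] [Finite R] (hσ : Odd (orderOf σ)) :
    Function.Bijective (chiMap σ : (ι → R) → ι → R) :=
  Finite.injective_iff_bijective.mp (chiMap_injective hσ)

end BooleanRing

theorem stmt6 :
    Function.Bijective (fun (x : Fin 5 → ZMod 2) => fun (i : Fin 5) =>
      x i + x (i + 2) + x i * x (i + 3)) := by
  let _ : BooleanRing (ZMod 2) := { isIdempotentElem := by unfold IsIdempotentElem; decide }
  have hσ : orderOf (Equiv.addRight (2 : Fin 5)) ∣ 5 := orderOf_dvd_of_pow_eq_one (by decide)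
  -- In `Fin 5` the cell `i + 3` is `i - 2`, the predecessor of `i` under the shift by `2`.
  exact stmt6_general (Odd.of_dvd_nat (by decide) hσ)
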